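/- There exists a constant C>0 depending only on T, ϕ_1, ϕ_2, π_1, π_2, λ_1, λ_2, G_1, G_2 (and not on N, M, the initial vector or the boundary data) such that every discrete solution (u^n) satisfies ∑_{i=1,2} ∑_{n=0}^{M−1} δt ∑_{j∈J_{int,i}} (ξ_i(u^{n+1}_{j+1/2})−ξ_i(u^{n+1}_{j−1/2}))²/δx + ∑_{n=0}^{M−1} δt [ (ξ_1(c^{n+1})−ξ_1(u^{n+1}_{−1/2}))²/(δx/2) + (ξ_2(u^{n+1}_{1/2})−ξ_2(d^{n+1}))²/(δx/2) ] ≤ C, where J_{int,1}={−N+1,…,−1}, J_{int,2}={1,…,N−1}, and (c^{n+1},d^{n+1})=(c(u^{n+1}_{−1/2},u^{n+1}_{1/2}),d(u^{n+1}_{−1/2},u^{n+1}_{1/2})). -/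

import Mathlib

open Set

noncomputable section

/-- The monotone graph `π̃` associated to an increasing capillary pressure function `π`. -/
def tildePi (π : ℝ → ℝ) (s : ℝ) : Set ℝ :=
  if s = 0 then Set.Iic (π 0) else if s = 1 then Set.Ici (π 1) else {π s}

/-- The connection condition `π̃₁(c) ∩ π̃₂(d) ≠ ∅`. -/
def Connects (π₁ π₂ : ℝ → ℝ) (c d : ℝ) : Prop :=
  (tildePi π₁ c ∩ tildePi π₂ d).Nonempty

/-- The porosity `ϕ_{i(j)}` of the cell `(x_j, x_{j+1})` (indexed by `j`, representing the
unknown `u_{j+1/2}`): `ϕ₁` if `j < 0` (cell in `Ω₁`), `ϕ₂` if `j ≥ 0` (cell in `Ω₂`). -/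
def phiCoef (ϕ₁ ϕ₂ : ℝ) (j : ℤ) : ℝ := if j < 0 then ϕ₁ else ϕ₂

/-- The numerical flux `F_j[v]` through `x_j`, for a vector `v` (where `v j` stands for
`v_{j+1/2}`), with boundary data `ub = ū`, `uB = ū̄` and interface function `c`. -/
def numFlux (G₁ G₂ : ℝ → ℝ → ℝ) (φ₁ φ₂ : ℝ → ℝ) (c : ℝ → ℝ → ℝ) (δx : ℝ) (N : ℤ)
    (ub uB : ℝ) (v : ℤ → ℝ) (j : ℤ) : ℝ :=
  if j = -N then G₁ ub (v (-N))
  else if j = N then G₂ (v (N - 1)) uB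
  else if j < 0 then G₁ (v (j - 1)) (v j) - (φ₁ (v j) - φ₁ (v (j - 1))) / δx
  else if j = 0 then
    G₁ (v (-1)) (c (v (-1)) (v 0)) - 2 * (φ₁ (c (v (-1)) (v 0)) - φ₁ (v (-1))) / δx
  else G₂ (v (j - 1)) (v j) - (φ₂ (v j) - φ₂ (v (j - 1))) / δx

/-- The left-hand side of the implicit finite volume scheme at time step `n → n+1`,
cell `j`. -/
def schemeLHS (G₁ G₂ : ℝ → ℝ → ℝ) (φ₁ φ₂ : ℝ → ℝ) (c : ℝ → ℝ → ℝ)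
    (ϕ₁ ϕ₂ δx δt : ℝ) (N : ℤ) (ubar ubbar : ℕ → ℝ) (u : ℕ → ℤ → ℝ)
    (n : ℕ) (j : ℤ) : ℝ :=
  phiCoef ϕ₁ ϕ₂ j * (u (n + 1) j - u n j) * δx / δt
    + numFlux G₁ G₂ φ₁ φ₂ c δx N (ubar (n + 1)) (ubbar (n + 1)) (u (n + 1)) (j + 1)
    - numFlux G₁ G₂ φ₁ φ₂ c δx N (ubar (n + 1)) (ubbar (n + 1)) (u (n + 1)) j

/-- `u` takes values in `[0,1]` on the computational cells up to time level `M`. -/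
def InRange (N : ℤ) (M : ℕ) (u : ℕ → ℤ → ℝ) : Prop :=
  ∀ n ≤ M, ∀ j ∈ Finset.Icc (-N) (N - 1), u n j ∈ Set.Icc (0 : ℝ) 1

/-- `u` is a discrete solution of the implicit finite volume scheme. -/
def IsDiscreteSolution (G₁ G₂ : ℝ → ℝ → ℝ) (φ₁ φ₂ : ℝ → ℝ) (c : ℝ → ℝ → ℝ)
    (ϕ₁ ϕ₂ δx δt : ℝ) (N : ℤ) (M : ℕ) (ubar ubbar : ℕ → ℝ) (u : ℕ → ℤ → ℝ) : Prop :=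
  InRange N M u ∧ ∀ n < M, ∀ j ∈ Finset.Icc (-N) (N - 1),
    schemeLHS G₁ G₂ φ₁ φ₂ c ϕ₁ ϕ₂ δx δt N ubar ubbar u n j = 0

/-- `u` is a discrete supersolution of the implicit finite volume scheme. -/
def IsDiscreteSupersolution (G₁ G₂ : ℝ → ℝ → ℝ) (φ₁ φ₂ : ℝ → ℝ) (c : ℝ → ℝ → ℝ)
    (ϕ₁ ϕ₂ δx δt : ℝ) (N : ℤ) (M : ℕ) (ubar ubbar : ℕ → ℝ) (u : ℕ → ℤ → ℝ) : Prop :=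
  InRange N M u ∧ ∀ n < M, ∀ j ∈ Finset.Icc (-N) (N - 1),
    0 ≤ schemeLHS G₁ G₂ φ₁ φ₂ c ϕ₁ ϕ₂ δx δt N ubar ubbar u n j

/-- `u` is a discrete subsolution of the implicit finite volume scheme. -/
def IsDiscreteSubsolution (G₁ G₂ : ℝ → ℝ → ℝ) (φ₁ φ₂ : ℝ → ℝ) (c : ℝ → ℝ → ℝ)
    (ϕ₁ ϕ₂ δx δt : ℝ) (N : ℤ) (M : ℕ) (ubar ubbar : ℕ → ℝ) (u : ℕ → ℤ → ℝ) : Prop :=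
  InRange N M u ∧ ∀ n < M, ∀ j ∈ Finset.Icc (-N) (N - 1),
    schemeLHS G₁ G₂ φ₁ φ₂ c ϕ₁ ϕ₂ δx δt N ubar ubbar u n j ≤ 0

/-- `ξ(s) = ∫₀^s √(λ(a)) π'(a) da`. -/
def xi (lam πd : ℝ → ℝ) (s : ℝ) : ℝ := ∫ a in (0:ℝ)..s, Real.sqrt (lam a) * πd a

/-!
Test the scheme in the cell `j` with the capillary pressure `π_i(u_{j+1/2})` and sum by parts.

* In time, `s ↦ ∫₀^s π_i` is convex, so the accumulation terms dominate the increments of a stored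
  energy bounded independently of the mesh.
* In space, the Cauchy–Schwarz inequality for the measure `π'(a) da` gives
  `(ξ(b) - ξ(a))² ≤ (φ(b) - φ(a)) (π(b) - π(a))`, so diffusion produces the dissipation. By
  monotonicity of `G`, `G(a, b) (π(b) - π(a)) ≤ Ψ(b) - Ψ(a)` with `Ψ(s) = ∫₀^s G(a, a) π'(a) da`,
  so convection only contributes telescoping terms.
* At the interface there remains `F₀ (π₂(d) - π₁(c))`. If the two pressures differ, the connection
  condition makes one of the traces extreme, `c ∈ {0, 1}` or `d ∈ {0, 1}`, and by monotonicity the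
  flux `F₀` is then bounded from the side that matters, uniformly in the mesh.
-/

open MeasureTheory

section WeightedIntegrals

theorem sq_integral_mul_le {α : Type*} [MeasurableSpace α] {μ : Measure α} {g w : α → ℝ}
    (hw : 0 ≤ᵐ[μ] w) (hw_int : Integrable w μ) (hgw_int : Integrable (fun x => g x * w x) μ)
    (hg2w_int : Integrable (fun x => g x ^ 2 * w x) μ) :
    (∫ x, g x * w x ∂μ) ^ 2 ≤ (∫ x, g x ^ 2 * w x ∂μ) * ∫ x, w x ∂μ := by
  have quadratic_nonneg (t : ℝ) : 0 ≤ (∫ x, w x ∂μ) * (t * t) + (2 * ∫ x, g x * w x ∂μ) * t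
      + ∫ x, g x ^ 2 * w x ∂μ := by
    calc
      0 ≤ ∫ x, (g x + t) ^ 2 * w x ∂μ :=
        integral_nonneg_of_ae (hw.mono fun x hx => mul_nonneg (sq_nonneg _) hx)
      _ = ∫ x, t * t * w x + 2 * t * (g x * w x) + g x ^ 2 * w x ∂μ := by
        congr 1 with x; ring
      _ = _ := by
        rw [integral_add (by exact (hw_int.const_mul _).add (hgw_int.const_mul _)) hg2w_int,
          integral_add (hw_int.const_mul _) (hgw_int.const_mul _), integral_const_mul,
          integral_const_mul]
        ring
  have discrim_nonpos := discrim_le_zero quadratic_nonneg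
  unfold discrim at discrim_nonpos
  linarith

theorem sq_intervalIntegral_mul_le {g w : ℝ → ℝ} {a b : ℝ} (hw : ∀ x ∈ uIcc a b, 0 ≤ w x)
    (hw_int : IntervalIntegrable w volume a b)
    (hgw_int : IntervalIntegrable (fun x => g x * w x) volume a b)
    (hg2w_int : IntervalIntegrable (fun x => g x ^ 2 * w x) volume a b) :
    (∫ x in a..b, g x * w x) ^ 2 ≤ (∫ x in a..b, g x ^ 2 * w x) * ∫ x in a..b, w x := by
  have hw_ae : 0 ≤ᵐ[volume.restrict (uIoc a b)] w :=
    (ae_restrict_mem measurableSet_uIoc).mono fun x hx => hw x (uIoc_subset_uIcc hx)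
  have key := sq_integral_mul_le hw_ae hw_int.def' hgw_int.def' hg2w_int.def'
  simp only [intervalIntegral.intervalIntegral_eq_integral_uIoc]
  split_ifs <;> simpa using key

theorem intervalIntegral_mono_of_oriented {f g : ℝ → ℝ} {a b : ℝ}
    (hf : IntervalIntegrable f volume a b) (hg : IntervalIntegrable g volume a b)
    (hle : ∀ x ∈ Icc a b, f x ≤ g x) (hge : ∀ x ∈ Icc b a, g x ≤ f x) :
    ∫ x in a..b, f x ≤ ∫ x in a..b, g x := by
  rcases le_total a b with hab | hba
  · exact intervalIntegral.integral_mono_on hab hf hg hle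
  · rw [intervalIntegral.integral_symm b a, intervalIntegral.integral_symm b a]
    exact neg_le_neg (intervalIntegral.integral_mono_on hba hg.symm hf.symm hge)

end WeightedIntegrals

section SummationByParts

theorem sum_Icc_sub_mul {R : Type*} [CommRing R] (F p : ℤ → R) {k l : ℤ} (hkl : k ≤ l) :
    ∑ j ∈ Finset.Icc k l, (F (j + 1) - F j) * p j
      = F (l + 1) * p l - F k * p k - ∑ j ∈ Finset.Icc (k + 1) l, F j * (p j - p (j - 1)) := by
  induction l, hkl using Int.leInduction with
  | base => simp [sub_mul]
  | succ l hkl ih =>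
    rw [← Finset.insert_Icc_right_eq_Icc_add_one (by lia),
      ← Finset.insert_Icc_right_eq_Icc_add_one (by lia),
      Finset.sum_insert (by simp), Finset.sum_insert (by simp), ih, add_sub_cancel_right]
    ring

theorem sum_Icc_sub_sub_one {R : Type*} [CommRing R] (ψ : ℤ → R) {k l : ℤ} (hkl : k ≤ l) :
    ∑ j ∈ Finset.Icc (k + 1) l, (ψ j - ψ (j - 1)) = ψ l - ψ k := by
  have h := sum_Icc_sub_mul (fun _ => 1) ψ hkl
  simp only [sub_self, zero_mul, Finset.sum_const_zero, one_mul] at h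
  exact (sub_eq_zero.mp h.symm).symm

theorem sum_range_le_of_forall_le_sub {E D : ℕ → ℝ} {K : ℝ} {M : ℕ}
    (h : ∀ n < M, D n ≤ E n - E (n + 1) + K) :
    ∑ n ∈ Finset.range M, D n ≤ E 0 - E M + M * K := by
  calc
    ∑ n ∈ Finset.range M, D n ≤ ∑ n ∈ Finset.range M, (E n - E (n + 1) + K) :=
      Finset.sum_le_sum fun n hn => h n (Finset.mem_range.mp hn)
    _ = E 0 - E M + M * K := by
      rw [Finset.sum_add_distrib, Finset.sum_range_sub']; simp

end SummationByParts

section ConnectionCondition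

variable {π π₁ π₂ : ℝ → ℝ} {s p c d : ℝ}

theorem le_of_mem_tildePi (hs : s ≠ 0) (hp : p ∈ tildePi π s) : π s ≤ p := by
  rw [tildePi, if_neg hs] at hp
  split_ifs at hp with h1
  · exact h1 ▸ hp
  · exact (mem_singleton_iff.mp hp).ge

theorem ge_of_mem_tildePi (hs : s ≠ 1) (hp : p ∈ tildePi π s) : p ≤ π s := by
  rw [tildePi, if_neg hs] at hp
  split_ifs at hp with h0
  · exact h0 ▸ hp
  · exact (mem_singleton_iff.mp hp).le

theorem Connects.symm (h : Connects π₁ π₂ c d) : Connects π₂ π₁ d c := by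
  rwa [Connects, inter_comm]

theorem Connects.eq_zero_or_eq_one_of_lt (h : Connects π₁ π₂ c d) (hlt : π₂ d < π₁ c) :
    c = 0 ∨ d = 1 := by
  obtain ⟨p, hpc, hpd⟩ := h
  by_contra! hcd
  exact hlt.not_ge ((le_of_mem_tildePi hcd.1 hpc).trans (ge_of_mem_tildePi hcd.2 hpd))

end ConnectionCondition

section NumFlux

variable {G₁ G₂ : ℝ → ℝ → ℝ} {φ₁ φ₂ : ℝ → ℝ} {c : ℝ → ℝ → ℝ} {δx : ℝ} {N j : ℤ} {ub uB : ℝ}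
  {v : ℤ → ℝ}

theorem numFlux_left : numFlux G₁ G₂ φ₁ φ₂ c δx N ub uB v (-N) = G₁ ub (v (-N)) :=
  if_pos rfl

theorem numFlux_right (hN : 0 < N) :
    numFlux G₁ G₂ φ₁ φ₂ c δx N ub uB v N = G₂ (v (N - 1)) uB := by
  rw [numFlux, if_neg (by lia), if_pos rfl]

theorem numFlux_of_neg (hjN : -N < j) (hj : j < 0) :
    numFlux G₁ G₂ φ₁ φ₂ c δx N ub uB v j
      = G₁ (v (j - 1)) (v j) - (φ₁ (v j) - φ₁ (v (j - 1))) / δx := by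
  rw [numFlux, if_neg (by lia), if_neg (by lia), if_pos hj]

theorem numFlux_of_pos (hj : 0 < j) (hjN : j < N) :
    numFlux G₁ G₂ φ₁ φ₂ c δx N ub uB v j
      = G₂ (v (j - 1)) (v j) - (φ₂ (v j) - φ₂ (v (j - 1))) / δx := by
  rw [numFlux, if_neg (by lia), if_neg (by lia), if_neg (by lia), if_neg (by lia)]

theorem numFlux_zero (hN : 0 < N) :
    numFlux G₁ G₂ φ₁ φ₂ c δx N ub uB v 0
      = G₁ (v (-1)) (c (v (-1)) (v 0)) - 2 * (φ₁ (c (v (-1)) (v 0)) - φ₁ (v (-1))) / δx := by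
  rw [numFlux, if_neg (by lia), if_neg (by lia), if_neg (by lia), if_pos rfl]

end NumFlux

/-- The data of one of the two homogeneous subdomains `Ω_i`: porosity `ϕ`, capillary pressure `π`
with a density `pressureDeriv` standing for its a.e. derivative, mobility `λ`, Kirchhoff transform
`φ` of the mobility, and a monotone two-point convection flux `G`. Functions of the saturation are
only constrained on `[0, 1]`. -/
structure PorousMedium where
  porosity : ℝ
  pressure : ℝ → ℝ
  pressureDeriv : ℝ → ℝ
  mobility : ℝ → ℝ
  kirchhoff : ℝ → ℝ
  flux : ℝ → ℝ → ℝ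
  porosity_nonneg : 0 ≤ porosity
  pressureDeriv_nonneg : ∀ s ∈ Icc (0 : ℝ) 1, 0 ≤ pressureDeriv s
  intervalIntegrable_pressureDeriv : IntervalIntegrable pressureDeriv volume 0 1
  pressure_sub : ∀ s ∈ Icc (0 : ℝ) 1, ∀ t ∈ Icc (0 : ℝ) 1,
    pressure t - pressure s = ∫ a in s..t, pressureDeriv a
  continuousOn_mobility : ContinuousOn mobility (Icc 0 1)
  mobility_nonneg : ∀ s ∈ Icc (0 : ℝ) 1, 0 ≤ mobility s
  kirchhoff_eq : ∀ s ∈ Icc (0 : ℝ) 1, kirchhoff s = ∫ a in (0 : ℝ)..s, mobility a * pressureDeriv a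
  continuousOn_flux_diag : ContinuousOn (fun s => flux s s) (Icc 0 1)
  monotoneOn_flux : ∀ b ∈ Icc (0 : ℝ) 1, MonotoneOn (fun a => flux a b) (Icc 0 1)
  antitoneOn_flux : ∀ a ∈ Icc (0 : ℝ) 1, AntitoneOn (fun b => flux a b) (Icc 0 1)

namespace PorousMedium

section Medium

variable (m : PorousMedium) {a b s h δx δt : ℝ}

/-- The function `ξ(s) = ∫₀^s √λ π'`, whose discrete gradient the energy estimate controls. -/
def dissipationPotential : ℝ → ℝ := xi m.mobility m.pressureDeriv

/-- The potential `Ψ(s) = ∫₀^s f π'` of the convection flux `f(s) = G(s, s)`, which turns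
convection tested with the pressure into telescoping terms. -/
def convectionPotential (s : ℝ) : ℝ := ∫ a in (0 : ℝ)..s, m.flux a a * m.pressureDeriv a

/-- The convex capillary energy density `∫₀^s π`, whose derivative is the test function. -/
def capillaryEnergy (s : ℝ) : ℝ := ∫ a in (0 : ℝ)..s, m.pressure a

/-- The capillary energy stored in a set `J` of cells of width `δx`, weighted by the porosity. -/
def storedEnergy (δx : ℝ) (J : Finset ℤ) (v : ℤ → ℝ) : ℝ :=
  m.porosity * δx * ∑ j ∈ J, m.capillaryEnergy (v j)

/-- The numerical flux between two saturations at distance `h`; half-cell fluxes at the interface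
are obtained with `h = δx / 2`. -/
def edgeFlux (h a b : ℝ) : ℝ := m.flux a b - (m.kirchhoff b - m.kirchhoff a) / h

/-- A common bound on `[0, 1]` for the pressure and the convection flux, which by monotonicity are
controlled by their values at extreme saturations. -/
def bound : ℝ := max (max |m.pressure 0| |m.pressure 1|) (max |m.flux 0 1| |m.flux 1 0|)

theorem intervalIntegrable_mul_pressureDeriv {g : ℝ → ℝ} (hg : ContinuousOn g (Icc 0 1))
    (ha : a ∈ Icc (0 : ℝ) 1) (hb : b ∈ Icc (0 : ℝ) 1) :
    IntervalIntegrable (fun x => g x * m.pressureDeriv x) volume a b := by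
  have hab : uIcc a b ⊆ Icc 0 1 := uIcc_subset_Icc ha hb
  refine (m.intervalIntegrable_pressureDeriv.mono_set ?_).continuousOn_mul (hg.mono hab)
  rwa [uIcc_of_le (zero_le_one' ℝ)]

theorem primitive_mul_pressureDeriv_sub {g : ℝ → ℝ} (hg : ContinuousOn g (Icc 0 1))
    (ha : a ∈ Icc (0 : ℝ) 1) (hb : b ∈ Icc (0 : ℝ) 1) :
    (∫ x in (0 : ℝ)..b, g x * m.pressureDeriv x) - ∫ x in (0 : ℝ)..a, g x * m.pressureDeriv x
      = ∫ x in a..b, g x * m.pressureDeriv x :=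
  intervalIntegral.integral_interval_sub_left
    (m.intervalIntegrable_mul_pressureDeriv hg unitInterval.zero_mem hb)
    (m.intervalIntegrable_mul_pressureDeriv hg unitInterval.zero_mem ha)

theorem monotoneOn_pressure : MonotoneOn m.pressure (Icc 0 1) := by
  intro a ha b hb hab
  rw [← sub_nonneg, m.pressure_sub a ha b hb]
  exact intervalIntegral.integral_nonneg hab fun x hx =>
    m.pressureDeriv_nonneg x (Icc_subset_Icc ha.1 hb.2 hx)

theorem kirchhoff_sub (ha : a ∈ Icc (0 : ℝ) 1) (hb : b ∈ Icc (0 : ℝ) 1) :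
    m.kirchhoff b - m.kirchhoff a = ∫ x in a..b, m.mobility x * m.pressureDeriv x := by
  rw [m.kirchhoff_eq a ha, m.kirchhoff_eq b hb,
    m.primitive_mul_pressureDeriv_sub m.continuousOn_mobility ha hb]

theorem monotoneOn_kirchhoff : MonotoneOn m.kirchhoff (Icc 0 1) := by
  intro a ha b hb hab
  rw [← sub_nonneg, m.kirchhoff_sub ha hb]
  refine intervalIntegral.integral_nonneg hab fun x hx => ?_
  have hx' : x ∈ Icc (0 : ℝ) 1 := Icc_subset_Icc ha.1 hb.2 hx
  exact mul_nonneg (m.mobility_nonneg x hx') (m.pressureDeriv_nonneg x hx')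

theorem sq_dissipationPotential_sub_le (ha : a ∈ Icc (0 : ℝ) 1) (hb : b ∈ Icc (0 : ℝ) 1) :
    (m.dissipationPotential b - m.dissipationPotential a) ^ 2
      ≤ (m.kirchhoff b - m.kirchhoff a) * (m.pressure b - m.pressure a) := by
  have hsqrt : ContinuousOn (fun x => √(m.mobility x)) (Icc 0 1) := m.continuousOn_mobility.sqrt
  have hsq : EqOn (fun x => m.mobility x * m.pressureDeriv x)
      (fun x => √(m.mobility x) ^ 2 * m.pressureDeriv x) (uIcc a b) := fun x hx => by
    simp only [Real.sq_sqrt (m.mobility_nonneg x (uIcc_subset_Icc ha hb hx))]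
  rw [m.kirchhoff_sub ha hb, m.pressure_sub a ha b hb, intervalIntegral.integral_congr hsq,
    dissipationPotential, xi, xi, m.primitive_mul_pressureDeriv_sub hsqrt ha hb]
  exact sq_intervalIntegral_mul_le
    (fun x hx => m.pressureDeriv_nonneg x (uIcc_subset_Icc ha hb hx))
    (by simpa using m.intervalIntegrable_mul_pressureDeriv (continuousOn_const (c := 1)) ha hb)
    (m.intervalIntegrable_mul_pressureDeriv hsqrt ha hb)
    (m.intervalIntegrable_mul_pressureDeriv (hsqrt.pow 2) ha hb)

theorem flux_le_flux {a' b' : ℝ} (ha : a ∈ Icc (0 : ℝ) 1) (hb : b ∈ Icc (0 : ℝ) 1)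
    (ha' : a' ∈ Icc (0 : ℝ) 1) (hb' : b' ∈ Icc (0 : ℝ) 1) (haa' : a ≤ a') (hbb' : b' ≤ b) :
    m.flux a b ≤ m.flux a' b' :=
  (m.monotoneOn_flux b hb ha ha' haa').trans (m.antitoneOn_flux a' ha' hb' hb hbb')

theorem flux_mul_pressure_sub_le (ha : a ∈ Icc (0 : ℝ) 1) (hb : b ∈ Icc (0 : ℝ) 1) :
    m.flux a b * (m.pressure b - m.pressure a)
      ≤ m.convectionPotential b - m.convectionPotential a := by
  rw [m.pressure_sub a ha b hb, ← intervalIntegral.integral_const_mul, convectionPotential,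
    convectionPotential, m.primitive_mul_pressureDeriv_sub m.continuousOn_flux_diag ha hb]
  refine intervalIntegral_mono_of_oriented
    (m.intervalIntegrable_mul_pressureDeriv continuousOn_const ha hb)
    (m.intervalIntegrable_mul_pressureDeriv m.continuousOn_flux_diag ha hb)
    (fun x hx => ?_) (fun x hx => ?_)
  · have hx' : x ∈ Icc (0 : ℝ) 1 := Icc_subset_Icc ha.1 hb.2 hx
    exact mul_le_mul_of_nonneg_right (m.flux_le_flux ha hb hx' hx' hx.1 hx.2)
      (m.pressureDeriv_nonneg x hx')
  · have hx' : x ∈ Icc (0 : ℝ) 1 := Icc_subset_Icc hb.1 ha.2 hx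
    exact mul_le_mul_of_nonneg_right (m.flux_le_flux hx' hx' ha hb hx.2 hx.1)
      (m.pressureDeriv_nonneg x hx')

theorem edgeFlux_mul_pressure_sub_le (hh : 0 ≤ h) (ha : a ∈ Icc (0 : ℝ) 1)
    (hb : b ∈ Icc (0 : ℝ) 1) :
    m.edgeFlux h a b * (m.pressure b - m.pressure a)
      ≤ m.convectionPotential b - m.convectionPotential a
        - (m.dissipationPotential b - m.dissipationPotential a) ^ 2 / h := by
  calc
    m.edgeFlux h a b * (m.pressure b - m.pressure a)
      = m.flux a b * (m.pressure b - m.pressure a)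
        - (m.kirchhoff b - m.kirchhoff a) * (m.pressure b - m.pressure a) / h := by
      rw [edgeFlux]; ring
    _ ≤ _ := sub_le_sub (m.flux_mul_pressure_sub_le ha hb)
      (div_le_div_of_nonneg_right (m.sq_dissipationPotential_sub_le ha hb) hh)

theorem edgeFlux_half : m.edgeFlux (δx / 2) a b
    = m.flux a b - 2 * (m.kirchhoff b - m.kirchhoff a) / δx := by
  rw [edgeFlux, div_div_eq_mul_div, mul_comm 2]

theorem edgeFlux_le_edgeFlux {a' b' : ℝ} (hh : 0 ≤ h) (ha : a ∈ Icc (0 : ℝ) 1)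
    (hb : b ∈ Icc (0 : ℝ) 1) (ha' : a' ∈ Icc (0 : ℝ) 1) (hb' : b' ∈ Icc (0 : ℝ) 1)
    (haa' : a ≤ a') (hbb' : b' ≤ b) : m.edgeFlux h a b ≤ m.edgeFlux h a' b' :=
  sub_le_sub (m.flux_le_flux ha hb ha' hb' haa' hbb') <| div_le_div_of_nonneg_right
    (sub_le_sub (m.monotoneOn_kirchhoff hb' hb hbb') (m.monotoneOn_kirchhoff ha ha' haa')) hh

theorem edgeFlux_self : m.edgeFlux h s s = m.flux s s := by
  simp [edgeFlux]

theorem abs_pressure_le_bound (ha : a ∈ Icc (0 : ℝ) 1) : |m.pressure a| ≤ m.bound :=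
  (abs_le_max_abs_abs (m.monotoneOn_pressure unitInterval.zero_mem ha ha.1)
    (m.monotoneOn_pressure ha unitInterval.one_mem ha.2)).trans (le_max_left _ _)

theorem abs_flux_le_bound (ha : a ∈ Icc (0 : ℝ) 1) (hb : b ∈ Icc (0 : ℝ) 1) :
    |m.flux a b| ≤ m.bound :=
  (abs_le_max_abs_abs
    (m.flux_le_flux unitInterval.zero_mem unitInterval.one_mem ha hb ha.1 hb.2)
    (m.flux_le_flux ha hb unitInterval.one_mem unitInterval.zero_mem ha.2 hb.1)).trans
    (le_max_right _ _)

theorem bound_nonneg : 0 ≤ m.bound :=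
  (abs_nonneg _).trans (m.abs_pressure_le_bound unitInterval.zero_mem)

theorem abs_flux_mul_pressure_le {p : ℝ} (ha : a ∈ Icc (0 : ℝ) 1) (hb : b ∈ Icc (0 : ℝ) 1)
    (hp : p ∈ Icc (0 : ℝ) 1) : |m.flux a b * m.pressure p| ≤ m.bound ^ 2 := by
  rw [abs_mul, sq]
  exact mul_le_mul (m.abs_flux_le_bound ha hb) (m.abs_pressure_le_bound hp) (abs_nonneg _)
    m.bound_nonneg

theorem convectionPotential_sub_le (ha : a ∈ Icc (0 : ℝ) 1) (hb : b ∈ Icc (0 : ℝ) 1) :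
    m.convectionPotential b - m.convectionPotential a ≤ 2 * m.bound ^ 2 := by
  have hflux := m.flux_mul_pressure_sub_le hb ha
  have hpb := (abs_le.mp (m.abs_flux_mul_pressure_le hb ha hb)).2
  have hpa := (abs_le.mp (m.abs_flux_mul_pressure_le hb ha ha)).1
  linarith

theorem intervalIntegrable_pressure (ha : a ∈ Icc (0 : ℝ) 1) (hb : b ∈ Icc (0 : ℝ) 1) :
    IntervalIntegrable m.pressure volume a b :=
  (m.monotoneOn_pressure.mono (uIcc_subset_Icc ha hb)).intervalIntegrable

theorem capillaryEnergy_sub_le (ha : a ∈ Icc (0 : ℝ) 1) (hb : b ∈ Icc (0 : ℝ) 1) :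
    m.capillaryEnergy b - m.capillaryEnergy a ≤ (b - a) * m.pressure b := by
  calc
    m.capillaryEnergy b - m.capillaryEnergy a = ∫ x in a..b, m.pressure x :=
      intervalIntegral.integral_interval_sub_left
        (m.intervalIntegrable_pressure unitInterval.zero_mem hb)
        (m.intervalIntegrable_pressure unitInterval.zero_mem ha)
    _ ≤ ∫ _ in a..b, m.pressure b :=
      intervalIntegral_mono_of_oriented (m.intervalIntegrable_pressure ha hb)
        intervalIntegrable_const
        (fun x hx => m.monotoneOn_pressure (Icc_subset_Icc ha.1 hb.2 hx) hb hx.2)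
        (fun x hx => m.monotoneOn_pressure hb (Icc_subset_Icc hb.1 ha.2 hx) hx.1)
    _ = (b - a) * m.pressure b := intervalIntegral.integral_const _

theorem abs_capillaryEnergy_le (hs : s ∈ Icc (0 : ℝ) 1) : |m.capillaryEnergy s| ≤ m.bound := by
  have hpressure : ∀ x ∈ uIoc 0 s, ‖m.pressure x‖ ≤ m.bound := fun x hx =>
    m.abs_pressure_le_bound (uIcc_subset_Icc unitInterval.zero_mem hs (uIoc_subset_uIcc hx))
  calc
    |m.capillaryEnergy s| ≤ m.bound * |s - 0| :=
      intervalIntegral.norm_integral_le_of_norm_le_const hpressure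
    _ ≤ m.bound := by
      rw [sub_zero, abs_of_nonneg hs.1]
      exact mul_le_of_le_one_right m.bound_nonneg hs.2

theorem abs_storedEnergy_le {J : Finset ℤ} {v : ℤ → ℝ} (hδx : 0 ≤ δx)
    (hJ : J.card * δx ≤ 1) (hv : ∀ j ∈ J, v j ∈ Icc (0 : ℝ) 1) :
    |m.storedEnergy δx J v| ≤ m.porosity * m.bound := by
  have hsum : |∑ j ∈ J, m.capillaryEnergy (v j)| ≤ J.card * m.bound := by
    simpa using (Finset.abs_sum_le_sum_abs _ _).trans
      (Finset.sum_le_card_nsmul J _ _ fun j hj => m.abs_capillaryEnergy_le (hv j hj))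
  have hcoef : 0 ≤ m.porosity * δx := mul_nonneg m.porosity_nonneg hδx
  calc
    |m.storedEnergy δx J v| = m.porosity * δx * |∑ j ∈ J, m.capillaryEnergy (v j)| := by
      rw [storedEnergy, abs_mul, abs_of_nonneg hcoef]
    _ ≤ m.porosity * δx * (J.card * m.bound) := mul_le_mul_of_nonneg_left hsum hcoef
    _ = m.porosity * m.bound * (J.card * δx) := by ring
    _ ≤ m.porosity * m.bound :=
      mul_le_of_le_one_right (mul_nonneg m.porosity_nonneg m.bound_nonneg) hJ

theorem mul_sum_mul_pressure_le_storedEnergy_sub {J : Finset ℤ} {u v D : ℤ → ℝ} (hδx : 0 ≤ δx)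
    (hδt : 0 < δt) (hu : ∀ j ∈ J, u j ∈ Icc (0 : ℝ) 1) (hv : ∀ j ∈ J, v j ∈ Icc (0 : ℝ) 1)
    (hscheme : ∀ j ∈ J, m.porosity * (v j - u j) * δx / δt + D j = 0) :
    δt * ∑ j ∈ J, D j * m.pressure (v j) ≤ m.storedEnergy δx J u - m.storedEnergy δx J v := by
  simp only [storedEnergy, Finset.mul_sum, ← Finset.sum_sub_distrib]
  refine Finset.sum_le_sum fun j hj => ?_
  have hD : D j = -(m.porosity * (v j - u j) * δx / δt) := by linarith [hscheme j hj]
  calc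
    δt * (D j * m.pressure (v j))
      = -(m.porosity * δx * ((v j - u j) * m.pressure (v j))) := by
      rw [hD]; field_simp
    _ ≤ -(m.porosity * δx * (m.capillaryEnergy (v j) - m.capillaryEnergy (u j))) :=
      neg_le_neg <| mul_le_mul_of_nonneg_left (m.capillaryEnergy_sub_le (hu j hj) (hv j hj))
        (mul_nonneg m.porosity_nonneg hδx)
    _ = _ := by ring

theorem sum_sq_dissipationPotential_sub_le {k l : ℤ} {v F : ℤ → ℝ} (hδx : 0 ≤ δx) (hkl : k ≤ l)
    (hv : ∀ j ∈ Finset.Icc k l, v j ∈ Icc (0 : ℝ) 1)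
    (hF : ∀ j ∈ Finset.Icc (k + 1) l, F j = m.edgeFlux δx (v (j - 1)) (v j)) :
    ∑ j ∈ Finset.Icc (k + 1) l,
        (m.dissipationPotential (v j) - m.dissipationPotential (v (j - 1))) ^ 2 / δx
      ≤ ∑ j ∈ Finset.Icc k l, (F (j + 1) - F j) * m.pressure (v j)
        + F k * m.pressure (v k) - F (l + 1) * m.pressure (v l)
        + (m.convectionPotential (v l) - m.convectionPotential (v k)) := by
  rw [sum_Icc_sub_mul F (fun j => m.pressure (v j)) hkl,
    ← sum_Icc_sub_sub_one (fun j => m.convectionPotential (v j)) hkl]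
  have hedges := Finset.sum_le_sum fun j (hj : j ∈ Finset.Icc (k + 1) l) => by
    have hj' := Finset.mem_Icc.mp hj
    have hedge := m.edgeFlux_mul_pressure_sub_le hδx
      (hv (j - 1) (Finset.mem_Icc.mpr (by lia))) (hv j (Finset.mem_Icc.mpr (by lia)))
    rw [← hF j hj] at hedge
    exact hedge
  rw [Finset.sum_sub_distrib] at hedges
  linarith

end Medium

section Interface

variable {m₁ m₂ : PorousMedium} {a b c d δx : ℝ}

/-- `(c, d)` is a pair of interface traces for the cell values `a`, `b` on either side: the fluxes
through the two half-cells agree and the pressures are connected. -/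
def IsInterfacePair (m₁ m₂ : PorousMedium) (δx a b c d : ℝ) : Prop :=
  c ∈ Icc (0 : ℝ) 1 ∧ d ∈ Icc (0 : ℝ) 1 ∧
    m₁.flux a c - 2 * (m₁.kirchhoff c - m₁.kirchhoff a) / δx
      = m₂.flux d b - 2 * (m₂.kirchhoff b - m₂.kirchhoff d) / δx ∧
    Connects m₁.pressure m₂.pressure c d

theorem IsInterfacePair.edgeFlux_eq (h : IsInterfacePair m₁ m₂ δx a b c d) :
    m₁.edgeFlux (δx / 2) a c = m₂.edgeFlux (δx / 2) d b := by
  rw [edgeFlux_half, edgeFlux_half]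
  exact h.2.2.1

theorem IsInterfacePair.neg_le_edgeFlux (h : IsInterfacePair m₁ m₂ δx a b c d) (hδx : 0 ≤ δx)
    (ha : a ∈ Icc (0 : ℝ) 1) (hb : b ∈ Icc (0 : ℝ) 1) (hcd : c = 0 ∨ d = 1) :
    -(m₁.bound + m₂.bound) ≤ m₁.edgeFlux (δx / 2) a c := by
  have hB₁ := m₁.bound_nonneg
  have hB₂ := m₂.bound_nonneg
  have hδx' : 0 ≤ δx / 2 := by positivity
  rcases hcd with rfl | rfl
  · have hflux := m₁.edgeFlux_le_edgeFlux hδx' h.1 h.1 ha h.1 ha.1 le_rfl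
    have hdiag := (abs_le.mp (m₁.abs_flux_le_bound h.1 h.1)).1
    rw [edgeFlux_self] at hflux
    linarith
  · have hflux := m₂.edgeFlux_le_edgeFlux hδx' h.2.1 h.2.1 h.2.1 hb le_rfl hb.2
    have hdiag := (abs_le.mp (m₂.abs_flux_le_bound h.2.1 h.2.1)).1
    rw [edgeFlux_self, ← h.edgeFlux_eq] at hflux
    linarith

theorem IsInterfacePair.edgeFlux_le (h : IsInterfacePair m₁ m₂ δx a b c d) (hδx : 0 ≤ δx)
    (ha : a ∈ Icc (0 : ℝ) 1) (hb : b ∈ Icc (0 : ℝ) 1) (hcd : d = 0 ∨ c = 1) :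
    m₁.edgeFlux (δx / 2) a c ≤ m₁.bound + m₂.bound := by
  have hB₁ := m₁.bound_nonneg
  have hB₂ := m₂.bound_nonneg
  have hδx' : 0 ≤ δx / 2 := by positivity
  rcases hcd with rfl | rfl
  · have hflux := m₂.edgeFlux_le_edgeFlux hδx' h.2.1 hb h.2.1 h.2.1 le_rfl hb.1
    have hdiag := (abs_le.mp (m₂.abs_flux_le_bound h.2.1 h.2.1)).2
    rw [edgeFlux_self, ← h.edgeFlux_eq] at hflux
    linarith
  · have hflux := m₁.edgeFlux_le_edgeFlux hδx' ha h.1 h.1 h.1 ha.2 le_rfl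
    have hdiag := (abs_le.mp (m₁.abs_flux_le_bound h.1 h.1)).2
    rw [edgeFlux_self] at hflux
    linarith

theorem IsInterfacePair.edgeFlux_mul_pressure_jump_le (h : IsInterfacePair m₁ m₂ δx a b c d)
    (hδx : 0 ≤ δx) (ha : a ∈ Icc (0 : ℝ) 1) (hb : b ∈ Icc (0 : ℝ) 1) :
    m₁.edgeFlux (δx / 2) a c * (m₂.pressure d - m₁.pressure c) ≤ (m₁.bound + m₂.bound) ^ 2 := by
  have hB₁ := m₁.bound_nonneg
  have hB₂ := m₂.bound_nonneg
  have hπ₁ := abs_le.mp (m₁.abs_pressure_le_bound h.1)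
  have hπ₂ := abs_le.mp (m₂.abs_pressure_le_bound h.2.1)
  rcases lt_trichotomy (m₂.pressure d) (m₁.pressure c) with hlt | heq | hgt
  · have hF := h.neg_le_edgeFlux hδx ha hb (h.2.2.2.eq_zero_or_eq_one_of_lt hlt)
    nlinarith
  · rw [heq, sub_self, mul_zero]
    positivity
  · have hF := h.edgeFlux_le hδx ha hb (h.2.2.2.symm.eq_zero_or_eq_one_of_lt hgt)
    nlinarith

theorem IsInterfacePair.sq_dissipationPotential_sub_le (h : IsInterfacePair m₁ m₂ δx a b c d)
    (hδx : 0 ≤ δx) (ha : a ∈ Icc (0 : ℝ) 1) (hb : b ∈ Icc (0 : ℝ) 1) :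
    (m₁.dissipationPotential c - m₁.dissipationPotential a) ^ 2 / (δx / 2)
        + (m₂.dissipationPotential b - m₂.dissipationPotential d) ^ 2 / (δx / 2)
      ≤ (m₁.convectionPotential c - m₁.convectionPotential a)
        + (m₂.convectionPotential b - m₂.convectionPotential d)
        - m₁.edgeFlux (δx / 2) a c * (m₂.pressure b - m₁.pressure a)
        + (m₁.bound + m₂.bound) ^ 2 := by
  have hδx' : 0 ≤ δx / 2 := by positivity
  have hleft := m₁.edgeFlux_mul_pressure_sub_le hδx' ha h.1
  have hright := m₂.edgeFlux_mul_pressure_sub_le hδx' h.2.1 hb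
  rw [← h.edgeFlux_eq] at hright
  linarith [h.edgeFlux_mul_pressure_jump_le hδx ha hb]

end Interface

section Scheme

/-- The dissipation of a spatial profile `v` with interface traces `c`, `d`: the discrete squared
`H¹` seminorm of `ξ_i`, including the two half-cells at the interface. -/
def dissipation (m₁ m₂ : PorousMedium) (δx : ℝ) (N : ℤ) (v : ℤ → ℝ) (c d : ℝ) : ℝ :=
  ∑ j ∈ Finset.Icc (-N + 1) (-1),
      (m₁.dissipationPotential (v j) - m₁.dissipationPotential (v (j - 1))) ^ 2 / δx
  + ∑ j ∈ Finset.Icc 1 (N - 1),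
      (m₂.dissipationPotential (v j) - m₂.dissipationPotential (v (j - 1))) ^ 2 / δx
  + ((m₁.dissipationPotential c - m₁.dissipationPotential (v (-1))) ^ 2 / (δx / 2)
      + (m₂.dissipationPotential (v 0) - m₂.dissipationPotential d) ^ 2 / (δx / 2))

/-- The capillary energy stored in the whole domain `(-1, 1)`. -/
def totalEnergy (m₁ m₂ : PorousMedium) (δx : ℝ) (N : ℤ) (v : ℤ → ℝ) : ℝ :=
  m₁.storedEnergy δx (Finset.Icc (-N) (-1)) v + m₂.storedEnergy δx (Finset.Icc 0 (N - 1)) v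

variable {m₁ m₂ : PorousMedium} {δx δt : ℝ} {N : ℤ} {c d : ℝ → ℝ → ℝ}

theorem dissipation_le_sum_flux_mul_pressure {d₀ ub uB : ℝ} {v F : ℤ → ℝ} (hN : 0 < N)
    (hδx : 0 ≤ δx) (hv : ∀ j ∈ Finset.Icc (-N) (N - 1), v j ∈ Icc (0 : ℝ) 1)
    (hub : ub ∈ Icc (0 : ℝ) 1) (huB : uB ∈ Icc (0 : ℝ) 1)
    (h : IsInterfacePair m₁ m₂ δx (v (-1)) (v 0) (c (v (-1)) (v 0)) d₀)
    (hF : F = numFlux m₁.flux m₂.flux m₁.kirchhoff m₂.kirchhoff c δx N ub uB v) :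
    dissipation m₁ m₂ δx N v (c (v (-1)) (v 0)) d₀
      ≤ ∑ j ∈ Finset.Icc (-N) (-1), (F (j + 1) - F j) * m₁.pressure (v j)
        + ∑ j ∈ Finset.Icc 0 (N - 1), (F (j + 1) - F j) * m₂.pressure (v j)
        + 4 * (m₁.bound + m₂.bound) ^ 2 := by
  have hmem {j : ℤ} (hj : -N ≤ j ∧ j ≤ N - 1) : v j ∈ Icc (0 : ℝ) 1 :=
    hv j (Finset.mem_Icc.mpr hj)
  have hv_left : v (-N) ∈ Icc (0 : ℝ) 1 := hmem (by lia)
  have hv_right : v (N - 1) ∈ Icc (0 : ℝ) 1 := hmem (by lia)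
  have hleft := m₁.sum_sq_dissipationPotential_sub_le (k := -N) (l := -1) (v := v) (F := F) hδx
    (by lia) (fun j hj => hmem (by rw [Finset.mem_Icc] at hj; lia))
    (fun j hj => by rw [Finset.mem_Icc] at hj; rw [hF]; exact numFlux_of_neg (by lia) (by lia))
  have hright := m₂.sum_sq_dissipationPotential_sub_le (k := 0) (l := N - 1) (v := v) (F := F) hδx
    (by lia) (fun j hj => hmem (by rw [Finset.mem_Icc] at hj; lia))
    (fun j hj => by rw [Finset.mem_Icc] at hj; rw [hF]; exact numFlux_of_pos (by lia) (by lia))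
  have hinterface := h.sq_dissipationPotential_sub_le hδx (hmem (by lia)) (hmem (by lia))
  have hF_zero : F 0 = m₁.edgeFlux (δx / 2) (v (-1)) (c (v (-1)) (v 0)) := by
    rw [hF, numFlux_zero hN, edgeFlux_half]
  have hF_left : F (-N) * m₁.pressure (v (-N)) ≤ m₁.bound ^ 2 := by
    rw [hF, numFlux_left]
    exact (abs_le.mp (m₁.abs_flux_mul_pressure_le hub hv_left hv_left)).2
  have hF_right : -m₂.bound ^ 2 ≤ F N * m₂.pressure (v (N - 1)) := by
    rw [hF, numFlux_right hN]
    exact (abs_le.mp (m₂.abs_flux_mul_pressure_le hv_right huB hv_right)).1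
  have hΨ₁ := m₁.convectionPotential_sub_le hv_left h.1
  have hΨ₂ := m₂.convectionPotential_sub_le h.2.1 hv_right
  have hB : 0 ≤ m₁.bound * m₂.bound := mul_nonneg m₁.bound_nonneg m₂.bound_nonneg
  rw [neg_add_cancel] at hleft
  rw [zero_add, sub_add_cancel] at hright
  rw [← hF_zero] at hinterface
  unfold dissipation
  linarith

theorem mul_dissipation_le_totalEnergy_sub {M n : ℕ} {ubar ubbar : ℕ → ℝ} {u : ℕ → ℤ → ℝ}
    (hN : 0 < N) (hδx : 0 ≤ δx) (hδt : 0 < δt)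
    (hcd : ∀ a ∈ Icc (0 : ℝ) 1, ∀ b ∈ Icc (0 : ℝ) 1,
      IsInterfacePair m₁ m₂ δx a b (c a b) (d a b))
    (hubar : ubar (n + 1) ∈ Icc (0 : ℝ) 1) (hubbar : ubbar (n + 1) ∈ Icc (0 : ℝ) 1)
    (hu : IsDiscreteSolution m₁.flux m₂.flux m₁.kirchhoff m₂.kirchhoff c m₁.porosity m₂.porosity
      δx δt N M ubar ubbar u) (hn : n < M) :
    δt * dissipation m₁ m₂ δx N (u (n + 1)) (c (u (n + 1) (-1)) (u (n + 1) 0))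
        (d (u (n + 1) (-1)) (u (n + 1) 0))
      ≤ totalEnergy m₁ m₂ δx N (u n) - totalEnergy m₁ m₂ δx N (u (n + 1))
        + δt * (4 * (m₁.bound + m₂.bound) ^ 2) := by
  obtain ⟨hrange, hscheme⟩ := hu
  set F := numFlux m₁.flux m₂.flux m₁.kirchhoff m₂.kirchhoff c δx N (ubar (n + 1))
    (ubbar (n + 1)) (u (n + 1)) with hF
  have hbalance (j : ℤ) (hj : j ∈ Finset.Icc (-N) (N - 1)) :
      phiCoef m₁.porosity m₂.porosity j * (u (n + 1) j - u n j) * δx / δt + (F (j + 1) - F j)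
        = 0 := by
    rw [← add_sub_assoc]
    exact hscheme n hn j hj
  have hcells₁ : Finset.Icc (-N) (-1) ⊆ Finset.Icc (-N) (N - 1) :=
    Finset.Icc_subset_Icc_right (by lia)
  have hcells₂ : Finset.Icc 0 (N - 1) ⊆ Finset.Icc (-N) (N - 1) :=
    Finset.Icc_subset_Icc_left (by lia)
  have haccum₁ := m₁.mul_sum_mul_pressure_le_storedEnergy_sub (D := fun j => F (j + 1) - F j)
    hδx hδt (fun j hj => hrange n hn.le j (hcells₁ hj))
    (fun j hj => hrange (n + 1) hn j (hcells₁ hj)) fun j hj => by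
      have hj_neg : j < 0 := by rw [Finset.mem_Icc] at hj; lia
      simpa only [phiCoef, if_pos hj_neg] using hbalance j (hcells₁ hj)
  have haccum₂ := m₂.mul_sum_mul_pressure_le_storedEnergy_sub (D := fun j => F (j + 1) - F j)
    hδx hδt (fun j hj => hrange n hn.le j (hcells₂ hj))
    (fun j hj => hrange (n + 1) hn j (hcells₂ hj)) fun j hj => by
      have hj_nonneg : ¬j < 0 := by rw [Finset.mem_Icc] at hj; lia
      simpa only [phiCoef, if_neg hj_nonneg] using hbalance j (hcells₂ hj)
  have hspace := mul_le_mul_of_nonneg_left (dissipation_le_sum_flux_mul_pressure hN hδx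
    (hrange (n + 1) hn) hubar hubbar
    (hcd _ (hrange (n + 1) hn (-1) (Finset.mem_Icc.mpr (by lia)))
      _ (hrange (n + 1) hn 0 (Finset.mem_Icc.mpr (by lia)))) hF) hδt.le
  unfold totalEnergy
  linarith

theorem abs_totalEnergy_le {N : ℕ} {v : ℤ → ℝ} (hN : 0 < N)
    (hv : ∀ j ∈ Finset.Icc (-(N : ℤ)) (N - 1), v j ∈ Icc (0 : ℝ) 1) :
    |totalEnergy m₁ m₂ (1 / N) N v| ≤ m₁.porosity * m₁.bound + m₂.porosity * m₂.bound := by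
  have hN' : (N : ℝ) * (1 / N) = 1 := mul_one_div_cancel (by positivity)
  exact (abs_add_le _ _).trans <| add_le_add
    (m₁.abs_storedEnergy_le (by positivity) (by simpa using hN'.le)
      fun j hj => hv j (Finset.Icc_subset_Icc_right (by lia) hj))
    (m₂.abs_storedEnergy_le (by positivity) (by simpa using hN'.le)
      fun j hj => hv j (Finset.Icc_subset_Icc_left (by lia) hj))

end Scheme

end PorousMedium

open PorousMedium in
theorem stmt5_general {T : ℝ} (hT : 0 < T) (m₁ m₂ : PorousMedium) :
    ∃ C : ℝ, 0 < C ∧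
      ∀ (N M : ℕ), 0 < N → 0 < M →
      ∀ δx δt : ℝ, δx = 1 / (N : ℝ) → δt = T / (M : ℝ) →
      ∀ c d : ℝ → ℝ → ℝ,
      (∀ a ∈ Icc (0 : ℝ) 1, ∀ b ∈ Icc (0 : ℝ) 1,
        IsInterfacePair m₁ m₂ δx a b (c a b) (d a b)) →
      ∀ ubar ubbar : ℕ → ℝ,
      (∀ n, 1 ≤ n → n ≤ M → ubar n ∈ Icc (0 : ℝ) 1) →
      (∀ n, 1 ≤ n → n ≤ M → ubbar n ∈ Icc (0 : ℝ) 1) →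
      ∀ u : ℕ → ℤ → ℝ,
      IsDiscreteSolution m₁.flux m₂.flux m₁.kirchhoff m₂.kirchhoff c m₁.porosity m₂.porosity
        δx δt N M ubar ubbar u →
      ∑ n ∈ Finset.range M, δt * dissipation m₁ m₂ δx N (u (n + 1))
        (c (u (n + 1) (-1)) (u (n + 1) 0)) (d (u (n + 1) (-1)) (u (n + 1) 0)) ≤ C := by
  have hB₁ : 0 ≤ m₁.porosity * m₁.bound := mul_nonneg m₁.porosity_nonneg m₁.bound_nonneg
  have hB₂ : 0 ≤ m₂.porosity * m₂.bound := mul_nonneg m₂.porosity_nonneg m₂.bound_nonneg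
  refine ⟨2 * (m₁.porosity * m₁.bound + m₂.porosity * m₂.bound)
    + T * (4 * (m₁.bound + m₂.bound) ^ 2) + 1, by positivity, ?_⟩
  rintro N M hN hM δx δt rfl rfl c d hcd ubar ubbar hubar hubbar u hu
  have hδx : 0 ≤ 1 / (N : ℝ) := by positivity
  have hδt : 0 < T / (M : ℝ) := by positivity
  have hstep (n : ℕ) (hn : n < M) :=
    mul_dissipation_le_totalEnergy_sub (Int.natCast_pos.mpr hN) hδx hδt hcd
      (hubar (n + 1) n.succ_pos hn) (hubbar (n + 1) n.succ_pos hn) hu hn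
  have htime := sum_range_le_of_forall_le_sub
    (E := fun n => totalEnergy m₁ m₂ (1 / N) N (u n)) hstep
  have hinitial := abs_le.mp (abs_totalEnergy_le (m₁ := m₁) (m₂ := m₂) hN (hu.1 0 M.zero_le))
  have hfinal := abs_le.mp (abs_totalEnergy_le (m₁ := m₁) (m₂ := m₂) hN (hu.1 M le_rfl))
  have hMT : (M : ℝ) * (T / M) = T := mul_div_cancel₀ T (by positivity)
  rw [← mul_assoc, hMT] at htime
  linarith

/-- Discrete `L²(0,T;H¹)` energy estimate, uniform with respect to the discretization,
the initial vector and the boundary data, including the interface contributions. -/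
theorem stmt5
    (T : ℝ) (hT : 0 < T)
    (ϕ₁ ϕ₂ : ℝ) (hϕ₁ : ϕ₁ ∈ Ioo (0:ℝ) 1) (hϕ₂ : ϕ₂ ∈ Ioo (0:ℝ) 1)
    (π₁ π₂ πd₁ πd₂ lam₁ lam₂ φ₁ φ₂ : ℝ → ℝ) (G₁ G₂ : ℝ → ℝ → ℝ)
    (f₁ f₂ : ℝ → ℝ) (q : ℝ)
    (hπ₁mono : StrictMonoOn π₁ (Icc 0 1)) (hπ₁lip : ∃ K, LipschitzOnWith K π₁ (Icc 0 1))
    (hπ₂mono : StrictMonoOn π₂ (Icc 0 1)) (hπ₂lip : ∃ K, LipschitzOnWith K π₂ (Icc 0 1))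
    (hπd₁nonneg : ∀ s ∈ Icc (0:ℝ) 1, 0 ≤ πd₁ s)
    (hπd₂nonneg : ∀ s ∈ Icc (0:ℝ) 1, 0 ≤ πd₂ s)
    (hπd₁int : IntervalIntegrable πd₁ MeasureTheory.volume 0 1)
    (hπd₂int : IntervalIntegrable πd₂ MeasureTheory.volume 0 1)
    (hπ₁rep : ∀ s ∈ Icc (0:ℝ) 1, ∀ t ∈ Icc (0:ℝ) 1, π₁ t - π₁ s = ∫ a in s..t, πd₁ a)
    (hπ₂rep : ∀ s ∈ Icc (0:ℝ) 1, ∀ t ∈ Icc (0:ℝ) 1, π₂ t - π₂ s = ∫ a in s..t, πd₂ a)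
    (hlam₁lip : ∃ K, LipschitzOnWith K lam₁ (Icc 0 1))
    (hlam₂lip : ∃ K, LipschitzOnWith K lam₂ (Icc 0 1))
    (hlam₁nonneg : ∀ s ∈ Icc (0:ℝ) 1, 0 ≤ lam₁ s)
    (hlam₂nonneg : ∀ s ∈ Icc (0:ℝ) 1, 0 ≤ lam₂ s)
    (hlam₁0 : lam₁ 0 = 0) (hlam₁1 : lam₁ 1 = 0) (hlam₂0 : lam₂ 0 = 0) (hlam₂1 : lam₂ 1 = 0)
    (hφ₁def : ∀ s ∈ Icc (0:ℝ) 1, φ₁ s = ∫ a in (0:ℝ)..s, lam₁ a * πd₁ a)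
    (hφ₂def : ∀ s ∈ Icc (0:ℝ) 1, φ₂ s = ∫ a in (0:ℝ)..s, lam₂ a * πd₂ a)
    (hφ₁mono : StrictMonoOn φ₁ (Icc 0 1)) (hφ₁lip : ∃ K, LipschitzOnWith K φ₁ (Icc 0 1))
    (hφ₁zero : φ₁ 0 = 0)
    (hφ₂mono : StrictMonoOn φ₂ (Icc 0 1)) (hφ₂lip : ∃ K, LipschitzOnWith K φ₂ (Icc 0 1))
    (hφ₂zero : φ₂ 0 = 0)
    (hG₁lip : ∃ K, LipschitzOnWith K (fun p : ℝ × ℝ => G₁ p.1 p.2) (Icc 0 1 ×ˢ Icc 0 1))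
    (hG₁mono : ∀ b ∈ Icc (0:ℝ) 1, MonotoneOn (fun a => G₁ a b) (Icc 0 1))
    (hG₁anti : ∀ a ∈ Icc (0:ℝ) 1, AntitoneOn (fun b => G₁ a b) (Icc 0 1))
    (hG₂lip : ∃ K, LipschitzOnWith K (fun p : ℝ × ℝ => G₂ p.1 p.2) (Icc 0 1 ×ˢ Icc 0 1))
    (hG₂mono : ∀ b ∈ Icc (0:ℝ) 1, MonotoneOn (fun a => G₂ a b) (Icc 0 1))
    (hG₂anti : ∀ a ∈ Icc (0:ℝ) 1, AntitoneOn (fun b => G₂ a b) (Icc 0 1))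
    (hf₁lip : ∃ K, LipschitzOnWith K f₁ (Icc 0 1))
    (hf₂lip : ∃ K, LipschitzOnWith K f₂ (Icc 0 1))
    (hG₁diag : ∀ s ∈ Icc (0:ℝ) 1, G₁ s s = f₁ s)
    (hG₂diag : ∀ s ∈ Icc (0:ℝ) 1, G₂ s s = f₂ s)
    (hf₁0 : f₁ 0 = 0) (hf₂0 : f₂ 0 = 0) (hf₁1 : f₁ 1 = q) (hf₂1 : f₂ 1 = q) :
    ∃ C : ℝ, 0 < C ∧
      ∀ (N M : ℕ), 0 < N → 0 < M →
      ∀ δx δt : ℝ, δx = 1 / (N : ℝ) → δt = T / (M : ℝ) →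
      ∀ c d : ℝ → ℝ → ℝ,
      (∀ a ∈ Icc (0:ℝ) 1, ∀ b ∈ Icc (0:ℝ) 1,
        (c a b ∈ Icc (0:ℝ) 1 ∧ d a b ∈ Icc (0:ℝ) 1 ∧
          G₁ a (c a b) - 2 * (φ₁ (c a b) - φ₁ a) / δx
            = G₂ (d a b) b - 2 * (φ₂ b - φ₂ (d a b)) / δx ∧
          Connects π₁ π₂ (c a b) (d a b)) ∧
        ∀ c' d' : ℝ, c' ∈ Icc (0:ℝ) 1 → d' ∈ Icc (0:ℝ) 1 →
          G₁ a c' - 2 * (φ₁ c' - φ₁ a) / δx = G₂ d' b - 2 * (φ₂ b - φ₂ d') / δx →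
          Connects π₁ π₂ c' d' → c' = c a b ∧ d' = d a b) →
      ∀ ubar ubbar : ℕ → ℝ,
      (∀ n, 1 ≤ n → n ≤ M → ubar n ∈ Icc (0:ℝ) 1) →
      (∀ n, 1 ≤ n → n ≤ M → ubbar n ∈ Icc (0:ℝ) 1) →
      ∀ u : ℕ → ℤ → ℝ,
      IsDiscreteSolution G₁ G₂ φ₁ φ₂ c ϕ₁ ϕ₂ δx δt (N : ℤ) M ubar ubbar u →
        (∑ n ∈ Finset.range M, δt *
            ∑ j ∈ Finset.Icc (-(N : ℤ) + 1) (-1),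
              (xi lam₁ πd₁ (u (n + 1) j) - xi lam₁ πd₁ (u (n + 1) (j - 1))) ^ 2 / δx)
        + (∑ n ∈ Finset.range M, δt *
            ∑ j ∈ Finset.Icc (1 : ℤ) ((N : ℤ) - 1),
              (xi lam₂ πd₂ (u (n + 1) j) - xi lam₂ πd₂ (u (n + 1) (j - 1))) ^ 2 / δx)
        + (∑ n ∈ Finset.range M, δt *
            ((xi lam₁ πd₁ (c (u (n + 1) (-1)) (u (n + 1) 0))
                - xi lam₁ πd₁ (u (n + 1) (-1))) ^ 2 / (δx / 2)
             + (xi lam₂ πd₂ (u (n + 1) 0)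
                - xi lam₂ πd₂ (d (u (n + 1) (-1)) (u (n + 1) 0))) ^ 2 / (δx / 2)))
        ≤ C := by
  obtain ⟨C, hC, hestimate⟩ := stmt5_general hT
    ⟨ϕ₁, π₁, πd₁, lam₁, φ₁, G₁, hϕ₁.1.le, hπd₁nonneg, hπd₁int, hπ₁rep,
      hlam₁lip.elim fun _ h => h.continuousOn, hlam₁nonneg, hφ₁def,
      hf₁lip.elim fun _ h => h.continuousOn.congr hG₁diag, hG₁mono, hG₁anti⟩
    ⟨ϕ₂, π₂, πd₂, lam₂, φ₂, G₂, hϕ₂.1.le, hπd₂nonneg, hπd₂int, hπ₂rep,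
      hlam₂lip.elim fun _ h => h.continuousOn, hlam₂nonneg, hφ₂def,
      hf₂lip.elim fun _ h => h.continuousOn.congr hG₂diag, hG₂mono, hG₂anti⟩
  refine ⟨C, hC, fun N M hN hM δx δt hδx hδt c d hcd ubar ubbar hubar hubbar u hu => ?_⟩
  rw [← Finset.sum_add_distrib, ← Finset.sum_add_distrib]
  simp only [← mul_add]
  exact hestimate N M hN hM δx δt hδx hδt c d
    (fun a ha b hb => (hcd a ha b hb).1) ubar ubbar hubar hubbar u hu
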